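/- arXiv:1009.2642 — 3 statements merged into one kernel-verified Lean document; each statement's English description precedes it below -/
import Mathlib

section
/- Let k be an odd integer and let l, j be integers with 0 < l < j < k − l − j, and set m := gcd(l, j, k). Then every vertex of ℤ/kℤ has exactly 6 neighbours in S_{l,j,k} (for the vertex 0 these are l, j, l+j, k−l, k−j, k−l−j, which are pairwise distinct and nonzero), every 2-element subset contained in some member of S_{l,j,k} is contained in exactly two members of S_{l,j,k}, S_{l,j,k} has exactly 2k members and 3k such 2-element subsets (so its Euler characteristic k − 3k + 2k equals 0), and S_{l,j,k} has exactly m connected components, each with k/m vertices, which are pairwise combinatorially isomorphic. -/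
/-- The difference cycle `(a : b : c)` (with `c = n - a - b`) on `ℤ/nℤ`:
the collection of subsets of the form `{i, i + a, i + a + b}` for `i ∈ ℤ/nℤ`. -/
def dc (n a b : ℕ) : Set (Finset (ZMod n)) :=
  {s | ∃ i : ZMod n, s = {i, i + (a : ZMod n), i + (a : ZMod n) + (b : ZMod n)}}

/-- `S_{l,j,k}`: the union of the difference cycles `(l : j : k−l−j)` and
`(l : k−l−j : j)` on `ℤ/kℤ`. -/
def Sljk (k l j : ℕ) : Set (Finset (ZMod k)) := dc k l j ∪ dc k l (k - l - j)

/-- The graph on `ℤ/nℤ` whose edges are the 2-element subsets contained in some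
member of `S`. -/
def cGraph (n : ℕ) (S : Set (Finset (ZMod n))) : SimpleGraph (ZMod n) :=
  SimpleGraph.fromRel (fun v w => ∃ s ∈ S, v ∈ s ∧ w ∈ s)

section aux
variable {R : Type*} [CommRing R] [DecidableEq R]

structure Good (a b : R) : Prop where
  ha : a ≠ 0
  hb : b ≠ 0
  hab : a + b ≠ 0
  hs : a - b ≠ 0
  h2a : a + a ≠ 0
  h2b : b + b ≠ 0
  h2ab : a + b + (a + b) ≠ 0
  haab : a + a + b ≠ 0
  habb : a + b + b ≠ 0

def triA (a b x : R) : Finset R := {x, x + a, x + a + b}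
def triB (a b x : R) : Finset R := {x, x + a, x - b}
def TT (a b : R) : Set (Finset R) := Set.range (triA a b) ∪ Set.range (triB a b)

lemma mem_triA {a b x y : R} : y ∈ triA a b x ↔ y = x ∨ y = x + a ∨ y = x + a + b := by
  simp [triA]
lemma mem_triB {a b x y : R} : y ∈ triB a b x ↔ y = x ∨ y = x + a ∨ y = x - b := by
  simp [triB]

lemma triA_pair {a b i x y : R} (hx : x ∈ triA a b i) (hy : y ∈ triA a b i) (h : x ≠ y) :
    (y = x + a ∧ i = x) ∨ (y = x + b ∧ i = x - a) ∨ (y = x + (a + b) ∧ i = x) ∨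
    (x = y + a ∧ i = y) ∨ (x = y + b ∧ i = y - a) ∨ (x = y + (a + b) ∧ i = y) := by
  rw [mem_triA] at hx hy
  grind

lemma triB_pair {a b i x y : R} (hx : x ∈ triB a b i) (hy : y ∈ triB a b i) (h : x ≠ y) :
    (y = x + a ∧ i = x) ∨ (y = x + b ∧ i = x + b) ∨ (y = x + (a + b) ∧ i = x + b) ∨
    (x = y + a ∧ i = y) ∨ (x = y + b ∧ i = y + b) ∨ (x = y + (a + b) ∧ i = y + b) := by
  rw [mem_triB] at hx hy
  grind

lemma triA_inj {a b : R} (g : Good a b) : Function.Injective (triA a b) := by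
  intro x y h
  obtain ⟨h1, h2, h3, h4, h5, h6, h7, h8, h9⟩ := g
  have e1 : x ∈ triA a b y := h ▸ mem_triA.2 (by simp)
  have e2 : x + a ∈ triA a b y := h ▸ mem_triA.2 (by simp)
  rcases triA_pair e1 e2 (by grind) with h | h | h | h | h | h <;> grind

lemma triB_inj {a b : R} (g : Good a b) : Function.Injective (triB a b) := by
  intro x y h
  obtain ⟨h1, h2, h3, h4, h5, h6, h7, h8, h9⟩ := g
  have e1 : x ∈ triB a b y := h ▸ mem_triB.2 (by simp)
  have e2 : x + a ∈ triB a b y := h ▸ mem_triB.2 (by simp)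
  rcases triB_pair e1 e2 (by grind) with h | h | h | h | h | h <;> grind

lemma triA_ne_triB {a b : R} (g : Good a b) (x y : R) : triA a b x ≠ triB a b y := by
  intro h
  obtain ⟨h1, h2, h3, h4, h5, h6, h7, h8, h9⟩ := g
  have e1 : x ∈ triB a b y := h ▸ mem_triA.2 (by simp)
  have e2 : x + a ∈ triB a b y := h ▸ mem_triA.2 (by simp)
  have e3 : x + a + b ∈ triB a b y := h ▸ mem_triA.2 (by simp)
  have : x = y := by
    rcases triB_pair e1 e2 (by grind) with h | h | h | h | h | h <;> grind
  rw [mem_triB] at e3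
  grind

lemma TT_card [Finite R] {a b : R} (g : Good a b) : (TT a b).ncard = 2 * Nat.card R := by
  have : Fintype R := Fintype.ofFinite R
  unfold TT
  rw [Set.ncard_union_eq, Set.ncard_range_of_injective (triA_inj g),
    Set.ncard_range_of_injective (triB_inj g)]
  · ring
  · rw [Set.disjoint_left]
    rintro _ ⟨x, rfl⟩ ⟨y, h⟩
    exact triA_ne_triB g x y h.symm

/-- pairs in a common triangle -/
lemma TT_pair {a b : R} {s : Finset R} (hs : s ∈ TT a b) {x y : R} (hx : x ∈ s) (hy : y ∈ s)
    (h : x ≠ y) : ∃ d, (d = a ∨ d = b ∨ d = a + b) ∧ (y = x + d ∨ x = y + d) := by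
  rcases hs with ⟨i, rfl⟩ | ⟨i, rfl⟩
  · rcases triA_pair hx hy h with h | h | h | h | h | h
    · exact ⟨a, by simp, .inl h.1⟩
    · exact ⟨b, by simp, .inl h.1⟩
    · exact ⟨a + b, by simp, .inl h.1⟩
    · exact ⟨a, by simp, .inr h.1⟩
    · exact ⟨b, by simp, .inr h.1⟩
    · exact ⟨a + b, by simp, .inr h.1⟩
  · rcases triB_pair hx hy h with h | h | h | h | h | h
    · exact ⟨a, by simp, .inl h.1⟩
    · exact ⟨b, by simp, .inl h.1⟩
    · exact ⟨a + b, by simp, .inl h.1⟩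
    · exact ⟨a, by simp, .inr h.1⟩
    · exact ⟨b, by simp, .inr h.1⟩
    · exact ⟨a + b, by simp, .inr h.1⟩

/-- the two triangles through an edge -/
lemma TT_edge {a b : R} (g : Good a b) (x d : R) (hd : d = a ∨ d = b ∨ d = a + b) :
    ∃ i i', ∀ s, (s ∈ TT a b ∧ {x, x + d} ⊆ s) ↔ (s = triA a b i ∨ s = triB a b i') := by
  obtain ⟨h1, h2, h3, h4, h5, h6, h7, h8, h9⟩ := g
  rcases hd with rfl | rfl | rfl
  · refine ⟨x, x, fun s => ⟨?_, ?_⟩⟩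
    · rintro ⟨⟨i, rfl⟩ | ⟨i, rfl⟩, h⟩ <;> simp only [Finset.insert_subset_iff, Finset.singleton_subset_iff] at h
      · left; congr 1
        rcases triA_pair h.1 h.2 (by grind) with h | h | h | h | h | h <;> grind
      · right; congr 1
        rcases triB_pair h.1 h.2 (by grind) with h | h | h | h | h | h <;> grind
    · rintro (rfl | rfl)
      · exact ⟨.inl ⟨_, rfl⟩, by simp only [Finset.insert_subset_iff, Finset.singleton_subset_iff, mem_triA]; grind⟩
      · exact ⟨.inr ⟨_, rfl⟩, by simp only [Finset.insert_subset_iff, Finset.singleton_subset_iff, mem_triB]; grind⟩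
  · refine ⟨x - a, x + d, fun s => ⟨?_, ?_⟩⟩
    · rintro ⟨⟨i, rfl⟩ | ⟨i, rfl⟩, h⟩ <;> simp only [Finset.insert_subset_iff, Finset.singleton_subset_iff] at h
      · left; congr 1
        rcases triA_pair h.1 h.2 (by grind) with h | h | h | h | h | h <;> grind
      · right; congr 1
        rcases triB_pair h.1 h.2 (by grind) with h | h | h | h | h | h <;> grind
    · rintro (rfl | rfl)
      · exact ⟨.inl ⟨_, rfl⟩, by simp only [Finset.insert_subset_iff, Finset.singleton_subset_iff, mem_triA]; grind⟩
      · exact ⟨.inr ⟨_, rfl⟩, by simp only [Finset.insert_subset_iff, Finset.singleton_subset_iff, mem_triB]; grind⟩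
  · refine ⟨x, x + b, fun s => ⟨?_, ?_⟩⟩
    · rintro ⟨⟨i, rfl⟩ | ⟨i, rfl⟩, h⟩ <;> simp only [Finset.insert_subset_iff, Finset.singleton_subset_iff] at h
      · left; congr 1
        rcases triA_pair h.1 h.2 (by grind) with h | h | h | h | h | h <;> grind
      · right; congr 1
        rcases triB_pair h.1 h.2 (by grind) with h | h | h | h | h | h <;> grind
    · rintro (rfl | rfl)
      · exact ⟨.inl ⟨_, rfl⟩, by simp only [Finset.insert_subset_iff, Finset.singleton_subset_iff, mem_triA]; grind⟩
      · exact ⟨.inr ⟨_, rfl⟩, by simp only [Finset.insert_subset_iff, Finset.singleton_subset_iff, mem_triB]; grind⟩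

lemma TT_edge_iff {a b : R} (g : Good a b) (e : Finset R) :
    (e.card = 2 ∧ ∃ s ∈ TT a b, e ⊆ s) ↔
      ∃ x d, (d = a ∨ d = b ∨ d = a + b) ∧ e = {x, x + d} := by
  constructor
  · rintro ⟨h2, s, hs, hes⟩
    obtain ⟨x, y, hxy, rfl⟩ := Finset.card_eq_two.1 h2
    simp only [Finset.insert_subset_iff, Finset.singleton_subset_iff] at hes
    obtain ⟨d, hd, rfl | rfl⟩ := TT_pair hs hes.1 hes.2 hxy
    · exact ⟨x, d, hd, rfl⟩
    · exact ⟨y, d, hd, Finset.pair_comm _ _⟩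
  · rintro ⟨x, d, hd, rfl⟩
    obtain ⟨i, i', h⟩ := TT_edge g x d hd
    have := (h (triA a b i)).2 (.inl rfl)
    refine ⟨Finset.card_pair ?_, _, this.1, this.2⟩
    obtain ⟨h1, h2, h3, h4, h5, h6, h7, h8, h9⟩ := g
    grind

lemma TT_two {a b : R} (g : Good a b) (e : Finset R) (h2 : e.card = 2)
    (he : ∃ s ∈ TT a b, e ⊆ s) : {s ∈ TT a b | e ⊆ s}.ncard = 2 := by
  obtain ⟨x, d, hd, rfl⟩ := (TT_edge_iff g e).1 ⟨h2, he⟩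
  obtain ⟨i, i', h⟩ := TT_edge g x d hd
  have : {s ∈ TT a b | {x, x + d} ⊆ s} = {triA a b i, triB a b i'} := by
    ext s
    simpa using h s
  rw [this, Set.ncard_pair (triA_ne_triB g _ _)]

lemma pair_eq {x y c d : R} (h : ({x, x + c} : Finset R) = {y, y + d}) :
    (x = y ∧ c = d) ∨ c = - d := by
  have e1 : x ∈ ({y, y + d} : Finset R) := h ▸ by simp
  have e2 : x + c ∈ ({y, y + d} : Finset R) := h ▸ by simp
  have e3 : y ∈ ({x, x + c} : Finset R) := h ▸ by simp
  have e4 : y + d ∈ ({x, x + c} : Finset R) := h ▸ by simp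
  simp only [Finset.mem_insert, Finset.mem_singleton] at e1 e2 e3 e4
  grind

lemma TT_edges [Finite R] {a b : R} (g : Good a b) :
    {e : Finset R | e.card = 2 ∧ ∃ s ∈ TT a b, e ⊆ s}.ncard = 3 * Nat.card R := by
  have : {e : Finset R | e.card = 2 ∧ ∃ s ∈ TT a b, e ⊆ s} =
      (Set.range (fun x => ({x, x + a} : Finset R)) ∪ Set.range (fun x => ({x, x + b} : Finset R)))
      ∪ Set.range (fun x => ({x, x + (a + b)} : Finset R)) := by
    ext e
    rw [Set.mem_ofPred_eq, TT_edge_iff g]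
    constructor
    · rintro ⟨x, d, rfl | rfl | rfl, rfl⟩
      · exact .inl (.inl ⟨x, rfl⟩)
      · exact .inl (.inr ⟨x, rfl⟩)
      · exact .inr ⟨x, rfl⟩
    · rintro ((⟨x, rfl⟩ | ⟨x, rfl⟩) | ⟨x, rfl⟩)
      · exact ⟨x, a, by simp, rfl⟩
      · exact ⟨x, b, by simp, rfl⟩
      · exact ⟨x, a + b, by simp, rfl⟩
  obtain ⟨h1, h2, h3, h4, h5, h6, h7, h8, h9⟩ := g
  rw [this, Set.ncard_union_eq ?_ (Set.toFinite _) (Set.toFinite _),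
    Set.ncard_union_eq ?_ (Set.toFinite _) (Set.toFinite _),
    Set.ncard_range_of_injective, Set.ncard_range_of_injective, Set.ncard_range_of_injective]
  · ring
  · intro x y h; have := pair_eq h; grind
  · intro x y h; have := pair_eq h; grind
  · intro x y h; have := pair_eq h; grind
  · rw [Set.disjoint_left]
    rintro _ ⟨x, rfl⟩ ⟨y, h⟩
    have := pair_eq h; grind
  · rw [Set.disjoint_left]
    rintro _ (⟨x, rfl⟩ | ⟨x, rfl⟩) ⟨y, h⟩ <;> have := pair_eq h <;> grind

def nb (a b : R) : Finset R := {a, b, a + b, -a, -b, -a - b}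

lemma nb_card {a b : R} (g : Good a b) : (nb a b).card = 6 := by
  obtain ⟨h1, h2, h3, h4, h5, h6, h7, h8, h9⟩ := g
  unfold nb
  rw [Finset.card_insert_of_notMem, Finset.card_insert_of_notMem, Finset.card_insert_of_notMem,
    Finset.card_insert_of_notMem, Finset.card_insert_of_notMem, Finset.card_singleton] <;>
  simp only [Finset.mem_insert, Finset.mem_singleton] <;> grind

lemma nb_zero {a b : R} (g : Good a b) : 0 ∉ nb a b := by
  obtain ⟨h1, h2, h3, h4, h5, h6, h7, h8, h9⟩ := g
  simp only [nb, Finset.mem_insert, Finset.mem_singleton]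
  grind

lemma TT_adj {a b : R} (g : Good a b) (x y : R) :
    (x ≠ y ∧ ∃ s ∈ TT a b, x ∈ s ∧ y ∈ s) ↔ y - x ∈ nb a b := by
  constructor
  · rintro ⟨h, s, hs, hx, hy⟩
    obtain ⟨d, hd, h⟩ := TT_pair hs hx hy h
    simp only [nb, Finset.mem_insert, Finset.mem_singleton]
    grind
  · intro h
    refine ⟨?_, ?_⟩
    · rintro rfl
      exact nb_zero g (by simpa using h)
    · have key : ∀ u d : R, (d = a ∨ d = b ∨ d = a + b) → ∃ s ∈ TT a b, u ∈ s ∧ u + d ∈ s := by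
        intro u d hd
        obtain ⟨i, i', h⟩ := TT_edge g u d hd
        have := (h (triA a b i)).2 (.inl rfl)
        rw [Finset.insert_subset_iff, Finset.singleton_subset_iff] at this
        exact ⟨_, this⟩
      have : (∃ d, (d = a ∨ d = b ∨ d = a + b) ∧ y = x + d) ∨
          (∃ d, (d = a ∨ d = b ∨ d = a + b) ∧ x = y + d) := by
        simp only [nb, Finset.mem_insert, Finset.mem_singleton] at h
        rcases h with h | h | h | h | h | h
        · exact .inl ⟨a, by simp, by grind⟩
        · exact .inl ⟨b, by simp, by grind⟩
        · exact .inl ⟨a + b, by simp, by grind⟩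
        · exact .inr ⟨a, by simp, by grind⟩
        · exact .inr ⟨b, by simp, by grind⟩
        · exact .inr ⟨a + b, by simp, by grind⟩
      rcases this with ⟨d, hd, rfl⟩ | ⟨d, hd, rfl⟩
      · exact key x d hd
      · obtain ⟨s, h1, h2, h3⟩ := key y d hd
        exact ⟨s, h1, h3, h2⟩

lemma TT_translate {a b : R} (t : R) (s : Finset R) (hs : s ∈ TT a b) :
    s.image (fun x => x + t) ∈ TT a b := by
  rcases hs with ⟨i, rfl⟩ | ⟨i, rfl⟩
  · refine .inl ⟨i + t, ?_⟩
    simp only [triA, Finset.image_insert, Finset.image_singleton]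
    congr 2 <;> [ring; (congr 1; ring)]
  · refine .inr ⟨i + t, ?_⟩
    simp only [triB, Finset.image_insert, Finset.image_singleton]
    congr 2 <;> [ring; (congr 1; ring)]

end aux

lemma Sljk_eq {k l j : ℕ} (h : l + 2 * j < k) : Sljk k l j = TT (l : ZMod k) (j : ZMod k) := by
  have h1 : dc k l j = Set.range (triA (l : ZMod k) (j : ZMod k)) := by
    ext s; simp only [dc, triA, Set.mem_ofPred_eq, Set.mem_range, eq_comm]
  have h2 : dc k l (k - l - j) = Set.range (triB (l : ZMod k) (j : ZMod k)) := by
    have : ∀ i : ZMod k, i + (l : ZMod k) + ((k - l - j : ℕ) : ZMod k) = i - j := by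
      intro i
      rw [Nat.cast_sub (by omega), Nat.cast_sub (by omega), ZMod.natCast_self]; ring
    ext s; simp only [dc, triB, Set.mem_ofPred_eq, Set.mem_range, eq_comm, this]
  rw [Sljk, h1, h2, TT]

lemma good_of {k l j : ℕ} (hodd : Odd k) (hl : 0 < l) (hlj : l < j) (hj : l + 2 * j < k) :
    Good (l : ZMod k) (j : ZMod k) := by
  have key : ∀ n : ℕ, 0 < n → n < k → (n : ZMod k) ≠ 0 := by
    intro n h1 h2 h
    rw [ZMod.natCast_eq_zero_iff] at h
    exact absurd (Nat.le_of_dvd h1 h) (by omega)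
  have key2 : ∀ n : ℕ, 0 < n → n < k → (n : ZMod k) + n ≠ 0 := by
    intro n h1 h2 h
    have h' : ((2 * n : ℕ) : ZMod k) = 0 := by push_cast; rw [two_mul]; exact h
    rw [ZMod.natCast_eq_zero_iff] at h'
    have := (Nat.Coprime.dvd_of_dvd_mul_left (Nat.coprime_two_right.2 hodd) h')
    exact absurd (Nat.le_of_dvd h1 this) (by omega)
  refine ⟨key l hl (by omega), key j (by omega) (by omega), ?_, ?_, key2 l hl (by omega),
    key2 j (by omega) (by omega), ?_, ?_, ?_⟩
  · exact_mod_cast key (l + j) (by omega) (by omega)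
  · have := key (j - l) (by omega) (by omega)
    rw [Nat.cast_sub hlj.le] at this
    intro h; apply this; linear_combination -h
  · exact_mod_cast key2 (l + j) (by omega) (by omega)
  · exact_mod_cast key (l + l + j) (by omega) (by omega)
  · exact_mod_cast key (l + j + j) (by omega) (by omega)

lemma adj_iff {k l j : ℕ} (hodd : Odd k) (hl : 0 < l) (hlj : l < j) (hj : l + 2 * j < k)
    (v w : ZMod k) : (cGraph k (Sljk k l j)).Adj v w ↔ w - v ∈ nb (l : ZMod k) (j : ZMod k) := by
  rw [← TT_adj (good_of hodd hl hlj hj), cGraph, SimpleGraph.fromRel_adj, Sljk_eq hj]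
  constructor
  · rintro ⟨h, ⟨s, h1, h2, h3⟩ | ⟨s, h1, h2, h3⟩⟩
    · exact ⟨h, s, h1, h2, h3⟩
    · exact ⟨h, s, h1, h3, h2⟩
  · rintro ⟨h, h'⟩
    exact ⟨h, .inl h'⟩

lemma reach_iff {k l j : ℕ} (hodd : Odd k) (hl : 0 < l) (hlj : l < j) (hj : l + 2 * j < k)
    (v w : ZMod k) : (cGraph k (Sljk k l j)).Reachable v w ↔
      w - v ∈ AddSubgroup.zmultiples ((Nat.gcd l (Nat.gcd j k) : ℕ) : ZMod k) := by
  set m := Nat.gcd l (Nat.gcd j k) with hm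
  have hA := adj_iff hodd hl hlj hj
  set G := cGraph k (Sljk k l j)
  have mem : ∀ n : ℕ, m ∣ n → (n : ZMod k) ∈ AddSubgroup.zmultiples (m : ZMod k) := by
    rintro n ⟨c, rfl⟩
    refine AddSubgroup.mem_zmultiples_iff.2 ⟨c, ?_⟩
    simp [mul_comm]
  have ml := mem l (Nat.gcd_dvd_left _ _)
  have mj := mem j ((Nat.gcd_dvd_right _ _).trans (Nat.gcd_dvd_left _ _))
  constructor
  · rintro ⟨p⟩
    induction p with
    | nil => simp
    | cons h p ih =>
      rename_i u v w
      have : w - u = (w - v) + (v - u) := by ring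
      rw [this]
      refine add_mem ih ?_
      have := (hA _ _).1 h
      simp only [nb, Finset.mem_insert, Finset.mem_singleton] at this
      rcases this with h | h | h | h | h | h <;> rw [h]
      · exact ml
      · exact mj
      · exact add_mem ml mj
      · exact neg_mem ml
      · exact neg_mem mj
      · exact sub_mem (neg_mem ml) mj
  · let K : AddSubgroup (ZMod k) :=
      { carrier := {d | ∀ v, G.Reachable v (v + d)}
        zero_mem' := by intro v; simp
        add_mem' := by
          intro x y hx hy v
          have := (hx v).trans (hy (v + x))
          rwa [add_assoc] at this
        neg_mem' := by
          intro x hx v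
          have := (hx (v + -x)).symm
          simpa using this }
    have Kl : (l : ZMod k) ∈ K := fun v => SimpleGraph.Adj.reachable ((hA _ _).2 (by simp [nb]))
    have Kj : (j : ZMod k) ∈ K := fun v => SimpleGraph.Adj.reachable ((hA _ _).2 (by simp [nb]))
    have Km : (m : ZMod k) ∈ K := by
      have e1 := congrArg (Int.cast : ℤ → ZMod k) (Nat.gcd_eq_gcd_ab l (Nat.gcd j k))
      have e2 := congrArg (Int.cast : ℤ → ZMod k) (Nat.gcd_eq_gcd_ab j k)
      push_cast at e1 e2
      rw [ZMod.natCast_self, zero_mul, add_zero] at e2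
      rw [← hm, e2] at e1
      have : (m : ZMod k) = (Nat.gcdA l (j.gcd k)) • (l : ZMod k) +
          (Nat.gcdB l (j.gcd k) * Nat.gcdA j k) • (j : ZMod k) := by
        rw [zsmul_eq_mul, zsmul_eq_mul, e1]; push_cast; ring
      rw [this]
      exact add_mem (zsmul_mem Kl _) (zsmul_mem Kj _)
    intro h
    have := (AddSubgroup.zmultiples_le_of_mem Km) h v
    simpa using this

/-- For odd `k` and `0 < l < j < k−l−j`, `m = gcd(l, j, k)`: every vertex of `S_{l,j,k}`
has exactly 6 neighbours (for `0` these are `l, j, l+j, k−l, k−j, k−l−j`, pairwise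
distinct and nonzero), each edge lies in exactly two triangles, there are `2k`
triangles and `3k` edges (so `χ = k − 3k + 2k = 0`), and there are exactly `m`
connected components with `k/m` vertices each, pairwise combinatorially isomorphic. -/
theorem stmt_17 (k l j m : ℕ) (hodd : Odd k)
    (hl : 0 < l) (hlj : l < j) (hj : l + 2 * j < k)
    (hm : m = Nat.gcd l (Nat.gcd j k)) :
    let V : Finset (ZMod k) :=
      {(l : ZMod k), (j : ZMod k), ((l + j : ℕ) : ZMod k),
       ((k - l : ℕ) : ZMod k), ((k - j : ℕ) : ZMod k), ((k - l - j : ℕ) : ZMod k)}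
    (∀ v : ZMod k, {w : ZMod k | (cGraph k (Sljk k l j)).Adj v w}.ncard = 6) ∧
    V.card = 6 ∧ (0 : ZMod k) ∉ V ∧
    {w : ZMod k | (cGraph k (Sljk k l j)).Adj 0 w} = ↑V ∧
    (∀ e : Finset (ZMod k), e.card = 2 → (∃ s ∈ Sljk k l j, e ⊆ s) →
      {s ∈ Sljk k l j | e ⊆ s}.ncard = 2) ∧
    (Sljk k l j).ncard = 2 * k ∧
    {e : Finset (ZMod k) | e.card = 2 ∧ ∃ s ∈ Sljk k l j, e ⊆ s}.ncard = 3 * k ∧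
    (k : ℤ) - (3 * k : ℤ) + (2 * k : ℤ) = 0 ∧
    Nat.card (cGraph k (Sljk k l j)).ConnectedComponent = m ∧
    (∀ c : (cGraph k (Sljk k l j)).ConnectedComponent,
      Nat.card {v : ZMod k // (cGraph k (Sljk k l j)).connectedComponentMk v = c} = k / m) ∧
    (∀ c c' : (cGraph k (Sljk k l j)).ConnectedComponent,
      ∃ φ : ZMod k ≃ ZMod k,
        (∀ s : Finset (ZMod k), s ∈ Sljk k l j ↔ s.image φ ∈ Sljk k l j) ∧
        (∀ v : ZMod k, (cGraph k (Sljk k l j)).connectedComponentMk v = c →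
          (cGraph k (Sljk k l j)).connectedComponentMk (φ v) = c')) := by

  intro V
  have g := good_of hodd hl hlj hj
  have hA := adj_iff hodd hl hlj hj
  have hR := reach_iff hodd hl hlj hj
  rw [← hm] at hR
  have hS := Sljk_eq hj
  have hk : 0 < k := by omega
  have : NeZero k := ⟨hk.ne'⟩
  have hV : V = nb (l : ZMod k) (j : ZMod k) := by
    simp only [V, nb]
    rw [Nat.cast_sub (by omega : j ≤ k - l), Nat.cast_sub (by omega : l ≤ k),
      Nat.cast_sub (by omega : j ≤ k), ZMod.natCast_self]
    simp
  have hmk : m ∣ k := hm ▸ (Nat.gcd_dvd_right _ _).trans (Nat.gcd_dvd_right _ _)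
  have hm0 : 0 < m := hm ▸ Nat.gcd_pos_of_pos_left _ hl
  have hcard : Nat.card (ZMod k) = k := Nat.card_zmod k
  have hH : Nat.card (AddSubgroup.zmultiples (m : ZMod k)) = k / m := by
    rw [Nat.card_zmultiples, ZMod.addOrderOf_coe _ hk.ne', Nat.gcd_eq_right hmk]
  have hmkC : ∀ v w, (cGraph k (Sljk k l j)).connectedComponentMk v =
      (cGraph k (Sljk k l j)).connectedComponentMk w ↔
      w - v ∈ AddSubgroup.zmultiples (m : ZMod k) := by
    intro v w
    rw [SimpleGraph.ConnectedComponent.eq, hR]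
  refine ⟨?_, ?_, ?_, ?_, ?_, ?_, ?_, ?_, ?_, ?_, ?_⟩
  · intro v
    have : {w : ZMod k | (cGraph k (Sljk k l j)).Adj v w} =
        (fun x => v + x) '' (nb (l : ZMod k) (j : ZMod k) : Set (ZMod k)) := by
      ext w
      simp only [Set.mem_ofPred_eq, hA, Set.mem_image, Finset.mem_coe]
      constructor
      · intro h; exact ⟨_, h, by ring⟩
      · rintro ⟨x, hx, rfl⟩; simpa using hx
    rw [this, Set.ncard_image_of_injective _ (add_right_injective v), Set.ncard_coe_finset,
      nb_card g]
  · rw [hV, nb_card g]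
  · rw [hV]; exact nb_zero g
  · ext w
    simp [hA, hV]
  · rw [hS]; exact TT_two g
  · rw [hS, TT_card g, hcard]
  · rw [hS, TT_edges g, hcard]
  · ring
  · have e : (cGraph k (Sljk k l j)).ConnectedComponent ≃
        (ZMod k ⧸ AddSubgroup.zmultiples (m : ZMod k)) :=
      Quot.congr (ra := (cGraph k (Sljk k l j)).Reachable)
        (rb := (QuotientAddGroup.leftRel (AddSubgroup.zmultiples (m : ZMod k))).r)
        (Equiv.refl _) (by
        intro v w
        change (cGraph k (Sljk k l j)).Reachable v w ↔
          QuotientAddGroup.leftRel (AddSubgroup.zmultiples (m : ZMod k)) v w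
        rw [QuotientAddGroup.leftRel_apply, hR, sub_eq_neg_add])
    rw [Nat.card_congr e]
    have := AddSubgroup.card_eq_card_quotient_mul_card_addSubgroup
      (AddSubgroup.zmultiples (m : ZMod k))
    rw [hH, hcard] at this
    have h2 : m * (k / m) = k := Nat.mul_div_cancel' hmk
    have h3 : 0 < k / m := Nat.div_pos (Nat.le_of_dvd hk hmk) hm0
    exact Nat.eq_of_mul_eq_mul_right h3 (by rw [← this, h2])
  · intro c
    induction c using SimpleGraph.ConnectedComponent.ind with | _ u
    rw [← hH]
    refine Nat.card_congr ((Equiv.subRight u).subtypeEquiv ?_)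
    intro v
    rw [eq_comm, hmkC]
    rfl
  · intro c c'
    induction c using SimpleGraph.ConnectedComponent.ind with | _ u
    induction c' using SimpleGraph.ConnectedComponent.ind with | _ u'
    refine ⟨Equiv.addRight (u' - u), ?_, ?_⟩
    · intro s
      rw [hS]
      constructor
      · exact TT_translate _ s
      · intro h
        have := TT_translate (-(u' - u)) _ h
        rw [Finset.image_image] at this
        convert this
        have : ((fun x => x + -(u' - u)) ∘ (Equiv.addRight (u' - u))) = (id : ZMod k → ZMod k) := by
          funext x; simp only [Function.comp_apply, Equiv.coe_addRight, id]; ring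
        rw [this, Finset.image_id]
    · intro v
      rw [hmkC, hmkC]
      intro h
      convert h using 1
      simp only [Equiv.coe_addRight]; ring
end

section
/- Let k > 1 with k ≡ 1 or 5 (mod 6). Then the collection of all 3-element subsets of ℤ/kℤ is the disjoint union of the (k−1)/2 complexes M_{l,k}, taken over 1 ≤ l ≤ (k−1)/2, and the complexes S_{l,j,k}, taken over all integer pairs (l, j) with 1 ≤ l < j < k − l − j; moreover the number of such pairs (l, j) equals (k² − 6k + 5)/12, each M_{l,k} has gcd(l, k) connected components on k/gcd(l, k) vertices each, and each S_{l,j,k} has gcd(l, j, k) connected components on k/gcd(l, j, k) vertices each. -/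
/-- `M_{l,k}`: the difference cycle `(l : l : k−2l)` on `ℤ/kℤ`. -/
def Mlk (k l : ℕ) : Set (Finset (ZMod k)) := dc k l l

/-- Parameter range for the Möbius strips: `1 ≤ l ≤ (k−1)/2`. -/
def mRange (k l : ℕ) : Prop := 1 ≤ l ∧ 2 * l ≤ k - 1

/-- Parameter range for the tori: `1 ≤ l < j < k − l − j`. -/
def tRange (k : ℕ) (p : ℕ × ℕ) : Prop := 1 ≤ p.1 ∧ p.1 < p.2 ∧ p.1 + 2 * p.2 < k

namespace Aux

theorem cast_inj_lt {k a b : ℕ} (ha : a < k) (hb : b < k) (h : (a : ZMod k) = b) : a = b := by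
  have := (ZMod.natCast_eq_natCast_iff' a b k).1 h
  rwa [Nat.mod_eq_of_lt ha, Nat.mod_eq_of_lt hb] at this

/-- Rotation of a difference cycle. -/
theorem dc_rot {k a b c : ℕ} (h : a + b + c = k) : dc k a b = dc k b c := by
  have hc : (a : ZMod k) + b + c = 0 := by
    have : ((a + b + c : ℕ) : ZMod k) = 0 := by rw [h]; simp
    simpa using this
  ext s
  constructor
  · rintro ⟨i, rfl⟩
    refine ⟨i + a, ?_⟩
    have : i + (a : ZMod k) + b + c = i := by linear_combination hc
    rw [this]
    ext x; simp; tauto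
  · rintro ⟨i, rfl⟩
    refine ⟨i - a, ?_⟩
    have : i + (b : ZMod k) + c = i - a := by linear_combination hc
    rw [this]
    have h2 : i - (a : ZMod k) + a = i := by ring
    rw [h2]
    ext x; simp; tauto

theorem dc_same {k a b a' b' : ℕ} (ha : 1 ≤ a) (hb : 1 ≤ b) (hab : a + b < k)
    (ha' : 1 ≤ a') (hb' : 1 ≤ b') (hab' : a' + b' < k) (i : ZMod k)
    (h : ({i, i + (a : ZMod k), i + a + b} : Finset (ZMod k)) = {i, i + (a' : ZMod k), i + a' + b'}) :
    a = a' ∧ b = b' := by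
  have key : ∀ x : ℕ, x < k → ((x = 0 ∨ x = a ∨ x = a + b) ↔ (x = 0 ∨ x = a' ∨ x = a' + b')) := by
    intro x hx
    have h1 := Finset.ext_iff.1 h (i + (x : ZMod k))
    have e : ∀ y : ℕ, y < k → ((x : ZMod k) = (y : ZMod k) ↔ x = y) := fun y hy =>
      ⟨fun q => cast_inj_lt hx hy q, fun q => by rw [q]⟩
    have e0 := e 0 (by omega)
    have e1 := e a (by omega)
    have e2 := e (a + b) (by omega)
    have e3 := e a' (by omega)
    have e4 := e (a' + b') (by omega)
    push_cast at e0 e2 e4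
    simp only [Finset.mem_insert, Finset.mem_singleton, add_assoc, add_right_inj, add_eq_left,
      e0, e1, e2, e3, e4] at h1
    exact h1
  have k1 := key a (by omega)
  have k2 := key (a + b) (by omega)
  have k3 := key a' (by omega)
  have k4 := key (a' + b') (by omega)
  omega

theorem dc_inter {k a b a' b' : ℕ} (ha : 1 ≤ a) (hb : 1 ≤ b) (hab : a + b < k)
    (ha' : 1 ≤ a') (hb' : 1 ≤ b') (hab' : a' + b' < k) {s : Finset (ZMod k)}
    (h : s ∈ dc k a b) (h' : s ∈ dc k a' b') :
    (a = a' ∧ b = b') ∨ (b = a' ∧ a + b + b' = k) ∨ (a + b + a' = k ∧ a = b') := by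
  obtain ⟨i, rfl⟩ := h
  obtain ⟨i', h'⟩ := h'
  have hc : (a : ZMod k) + b + (k - a - b : ℕ) = 0 := by
    have : ((a + b + (k - a - b) : ℕ) : ZMod k) = 0 := by
      rw [show a + b + (k - a - b) = k by omega]; simp
    simpa using this
  have hi : i' ∈ ({i, i + (a : ZMod k), i + a + b} : Finset (ZMod k)) := by rw [h']; simp
  simp only [Finset.mem_insert, Finset.mem_singleton] at hi
  rcases hi with rfl | rfl | rfl
  · left; exact dc_same ha hb hab ha' hb' hab' _ h'
  · right; left
    have := dc_same (k := k) (a := b) (b := k - a - b) hb (by omega) (by omega) ha' hb' hab' (i + a) (by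
      rw [← h', show i + (a : ZMod k) + b + (k - a - b : ℕ) = i by linear_combination hc]
      ext x; simp; tauto)
    omega
  · right; right
    have := dc_same (k := k) (a := k - a - b) (b := a) (by omega) ha (by omega) ha' hb' hab' (i + a + b) (by
      rw [← h', show i + (a : ZMod k) + b + (k - a - b : ℕ) = i by linear_combination hc]
      ext x; simp; tauto)
    omega

theorem dc_card {k a b : ℕ} (ha : 1 ≤ a) (hb : 1 ≤ b) (hab : a + b < k) {s : Finset (ZMod k)}
    (h : s ∈ dc k a b) : s.card = 3 := by
  obtain ⟨i, rfl⟩ := h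
  have h1 : (a : ZMod k) ≠ 0 := fun q => by
    have := cast_inj_lt (k := k) (a := a) (b := 0) (by omega) (by omega) (by simpa using q)
    omega
  have h2 : (b : ZMod k) ≠ 0 := fun q => by
    have := cast_inj_lt (k := k) (a := b) (b := 0) (by omega) (by omega) (by simpa using q)
    omega
  have h3 : (a : ZMod k) + b ≠ 0 := fun q => by
    have := cast_inj_lt (k := k) (a := a + b) (b := 0) (by omega) (by omega) (by simpa using q)
    omega
  refine Finset.card_eq_three.2 ⟨_, _, _, ?_, ?_, ?_, rfl⟩
  · simpa using h1
  · simpa [add_assoc] using h3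
  · simpa using h2

theorem exists_dc {k : ℕ} (hk : 1 < k) {s : Finset (ZMod k)} (h : s.card = 3) :
    ∃ a b : ℕ, 1 ≤ a ∧ 1 ≤ b ∧ a + b < k ∧ s ∈ dc k a b := by
  haveI : NeZero k := ⟨by omega⟩
  obtain ⟨x, y, z, hxy, hxz, hyz, rfl⟩ := Finset.card_eq_three.1 h
  have main : ∀ y z : ZMod k, x ≠ y → x ≠ z → y ≠ z → (y - x).val < (z - x).val →
      ∃ a b : ℕ, 1 ≤ a ∧ 1 ≤ b ∧ a + b < k ∧ ({x, y, z} : Finset (ZMod k)) ∈ dc k a b := by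
    intro y z hxy hxz hyz hlt
    have hz := ZMod.val_lt (z - x)
    have hy0 : (y - x).val ≠ 0 := by
      rw [Ne, ZMod.val_eq_zero, sub_eq_zero]; exact fun q => hxy q.symm
    refine ⟨(y - x).val, (z - x).val - (y - x).val, by omega, by omega, by omega, x, ?_⟩
    rw [Nat.cast_sub hlt.le]
    simp only [ZMod.natCast_val, ZMod.cast_id', id]
    rw [show x + (y - x) = y by ring, show y + (z - x - (y - x)) = z by ring]
  rcases lt_trichotomy (y - x).val (z - x).val with hh | hh | hh
  · exact main y z hxy hxz hyz hh
  · exact absurd (by simpa using ZMod.val_injective k hh) hyz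
  · have := main z y hxz hxy hyz.symm hh
    rwa [show ({x, y, z} : Finset (ZMod k)) = {x, z, y} by ext w; simp; tauto]

theorem cover {k a b c : ℕ} (ha : 1 ≤ a) (hb : 1 ≤ b) (hc : 1 ≤ c) (h : a + b + c = k) :
    (∃ l, mRange k l ∧ dc k a b = Mlk k l) ∨
    (∃ p : ℕ × ℕ, tRange k p ∧ dc k a b ⊆ Sljk k p.1 p.2) := by
  have core : ∀ a b c : ℕ, 1 ≤ a → a < b → a < c → b ≠ c → a + b + c = k →
      ∃ p : ℕ × ℕ, tRange k p ∧ dc k a b ⊆ Sljk k p.1 p.2 := by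
    intro a b c ha hab hac hbc h
    rcases lt_or_gt_of_ne hbc with hh | hh
    · exact ⟨(a, b), ⟨ha, hab, by simp only; omega⟩, Set.subset_union_left⟩
    · refine ⟨(a, c), ⟨ha, hac, by simp only; omega⟩, ?_⟩
      have : b = k - a - c := by omega
      simp only [Sljk]
      rw [← this]
      exact Set.subset_union_right
  have r1 := dc_rot h
  have r2 := dc_rot (k := k) (a := b) (b := c) (c := a) (by omega)
  by_cases h1 : a = b
  · left; subst h1; exact ⟨a, ⟨ha, by omega⟩, rfl⟩
  by_cases h2 : b = c
  · left; subst h2; exact ⟨b, ⟨hb, by omega⟩, r1⟩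
  by_cases h3 : c = a
  · left; subst h3; exact ⟨c, ⟨hc, by omega⟩, r1.trans r2⟩
  right
  by_cases h4 : a < b ∧ a < c
  · exact core a b c ha h4.1 h4.2 h2 h
  by_cases h5 : b < a ∧ b < c
  · rw [r1]; exact core b c a hb h5.2 h5.1 h3 (by omega)
  · rw [r1, r2]; exact core c a b hc (by omega) (by omega) h1 (by omega)

theorem mem_S {k : ℕ} {p : ℕ × ℕ} (hp : tRange k p) {s : Finset (ZMod k)} (h : s ∈ Sljk k p.1 p.2) :
    ∃ b c, s ∈ dc k p.1 b ∧ p.1 < b ∧ p.1 < c ∧ p.1 + b + c = k ∧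
      ((b = p.2 ∧ b < c) ∨ (c = p.2 ∧ c < b)) := by
  obtain ⟨h1, h2, h3⟩ := hp
  rcases h with h | h
  · exact ⟨_, k - p.1 - p.2, h, by omega, by omega, by omega, by omega⟩
  · exact ⟨_, p.2, h, by omega, by omega, by omega, by omega⟩

theorem count (k : ℕ) : {l : ℕ | mRange k l}.ncard = (k - 1) / 2 := by
  have : {l : ℕ | mRange k l} = ((Finset.Icc 1 ((k - 1) / 2) : Finset ℕ) : Set ℕ) := by
    ext l; simp only [mRange, Set.mem_setOf_eq, Finset.coe_Icc, Set.mem_Icc]; omega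
  rw [this, Set.ncard_coe_finset]; simp

theorem tfin (k : ℕ) : {p : ℕ × ℕ | tRange k p}.Finite := by
  refine Set.Finite.subset ((Set.finite_Iio k).prod (Set.finite_Iio k)) ?_
  rintro ⟨l, j⟩ ⟨h1, h2, h3⟩
  simp only at h1 h2 h3
  simp only [Set.mem_prod, Set.mem_Iio]; omega

theorem tstep (k : ℕ) (hk : k % 2 = 1) :
    {p : ℕ × ℕ | tRange (k + 6) p}.ncard = {p : ℕ × ℕ | tRange k p}.ncard + k := by
  set A : Finset (ℕ × ℕ) := (tfin k).toFinset with hA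
  have e : {p : ℕ × ℕ | tRange (k + 6) p} = ((A.image (fun p => (p.1 + 2, p.2 + 2)) ∪
      ((Finset.Icc 2 ((k + 3) / 2)).image (fun j => (1, j)) ∪
       (Finset.Icc 3 ((k + 3) / 2)).image (fun j => (2, j))) : Finset (ℕ × ℕ)) : Set (ℕ × ℕ)) := by
    ext ⟨l, j⟩
    simp only [hA, tRange, Set.mem_setOf_eq, Finset.coe_union, Finset.coe_image, Set.Finite.coe_toFinset,
      Finset.coe_Icc, Set.mem_union, Set.mem_image, Set.mem_Icc, Prod.mk.injEq, Prod.exists]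
    constructor
    · rintro ⟨h1, h2, h3⟩
      by_cases hl : l = 1
      · right; left; exact ⟨j, by omega, hl.symm, rfl⟩
      by_cases hl : l = 2
      · right; right; exact ⟨j, by omega, hl.symm, rfl⟩
      left; exact ⟨l - 2, j - 2, by omega, by omega, by omega⟩
    · rintro (⟨a, b, h, rfl, rfl⟩ | ⟨a, h, rfl, rfl⟩ | ⟨a, h, rfl, rfl⟩) <;> omega
  have hc : {p : ℕ × ℕ | tRange k p}.ncard = A.card := by
    rw [hA, Set.ncard_eq_toFinset_card _ (tfin k)]
  rw [e, Set.ncard_coe_finset, hc, Finset.card_union_of_disjoint, Finset.card_union_of_disjoint,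
    Finset.card_image_of_injective, Finset.card_image_of_injective, Finset.card_image_of_injective]
  · simp; omega
  · intro a b h; simpa using h
  · intro a b h; simpa using h
  · rintro ⟨a, b⟩ ⟨c, d⟩ h; simpa using h
  · rw [Finset.disjoint_left]
    rintro ⟨a, b⟩ h h'
    simp only [Finset.mem_image, Prod.mk.injEq] at h h'
    obtain ⟨_, _, h, _⟩ := h
    obtain ⟨_, _, h', _⟩ := h'
    omega
  · rw [Finset.disjoint_left]
    rintro ⟨a, b⟩ h h'
    simp only [hA, tRange, Finset.mem_union, Finset.mem_image, Prod.mk.injEq, Set.Finite.mem_toFinset,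
      Set.mem_setOf_eq] at h h'
    obtain ⟨_, h0, h, _⟩ := h
    rcases h' with ⟨_, _, h', _⟩ | ⟨_, _, h', _⟩ <;> omega

theorem tsmall (k : ℕ) (hk : k ≤ 5) : {p : ℕ × ℕ | tRange k p}.ncard = 0 := by
  have : {p : ℕ × ℕ | tRange k p} = ∅ := by
    ext p; simp only [tRange, Set.mem_setOf_eq, Set.mem_empty_iff_false, iff_false]; omega
  rw [this]; simp

theorem tcount (m r : ℕ) (hr : r = 1 ∨ r = 5) :
    12 * {p : ℕ × ℕ | tRange (6 * m + r) p}.ncard + 6 * (6 * m + r) = (6 * m + r) ^ 2 + 5 := by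
  induction m with
  | zero => rcases hr with rfl | rfl <;> simp [tsmall]
  | succ m ih =>
    rw [show 6 * (m + 1) + r = 6 * m + r + 6 by ring, tstep _ (by omega)]
    nlinarith

theorem tcount' (k : ℕ) (hmod : k % 6 = 1 ∨ k % 6 = 5) :
    {p : ℕ × ℕ | tRange k p}.ncard = (k ^ 2 - 6 * k + 5) / 12 := by
  have := tcount (k / 6) (k % 6) hmod
  rw [Nat.div_add_mod] at this
  by_cases h : k ≤ 5
  · rw [tsmall k h]
    have : k = 1 ∨ k = 5 := by omega
    rcases this with rfl | rfl <;> simp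
  · have : 6 * k ≤ k ^ 2 := by nlinarith
    omega

theorem comps {k g : ℕ} (hk : 0 < k) (hg : g ∣ k) (G : SimpleGraph (ZMod k))
    (h : ∀ v w, G.Reachable v w ↔ w - v ∈ AddSubgroup.zmultiples (g : ZMod k)) :
    Nat.card G.ConnectedComponent = g ∧
      ∀ c : G.ConnectedComponent,
        Nat.card {v : ZMod k // G.connectedComponentMk v = c} = k / g := by
  haveI : NeZero k := ⟨by omega⟩
  have hg0 : 0 < g := Nat.pos_of_dvd_of_pos hg hk
  set H := AddSubgroup.zmultiples (g : ZMod k) with hH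
  have hcard : Nat.card H = k / g := by
    rw [hH, Nat.card_zmultiples, ZMod.addOrderOf_coe _ hk.ne', Nat.gcd_eq_right hg]
  have hfib : ∀ c : G.ConnectedComponent,
        Nat.card {v : ZMod k // G.connectedComponentMk v = c} = k / g := by
    intro c
    induction c using SimpleGraph.ConnectedComponent.ind with
    | _ u =>
    rw [← hcard]
    refine Nat.card_congr ⟨fun v => ⟨v.1 - u, ?_⟩, fun x => ⟨u + x.1, ?_⟩, ?_, ?_⟩
    · exact (h u v.1).1 (SimpleGraph.ConnectedComponent.exact v.2).symm
    · exact SimpleGraph.ConnectedComponent.sound ((h u _).2 (by simp)).symm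
    · intro v; simp
    · intro v; simp
  refine ⟨?_, hfib⟩
  have e : Nat.card (ZMod k ⧸ H) = Nat.card G.ConnectedComponent := by
    refine Nat.card_congr (Quot.congr (ra := (QuotientAddGroup.leftRel H).r) (rb := G.Reachable)
      (Equiv.refl _) ?_)
    intro a b
    refine (QuotientAddGroup.leftRel_apply (s := H)).trans ?_
    rw [show -a + b = b - a by ring, ← h]
    rfl
  rw [← e]
  have h1 := AddSubgroup.card_eq_card_quotient_mul_card_addSubgroup H
  rw [hcard, Nat.card_zmod] at h1
  have h2 : k / g * g = k := Nat.div_mul_cancel hg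
  have h3 : 0 < k / g := Nat.div_pos (Nat.le_of_dvd hk hg) hg0
  have h4 : Nat.card (ZMod k ⧸ H) * (k / g) = g * (k / g) := by rw [← h1, mul_comm, h2]
  exact Nat.eq_of_mul_eq_mul_right h3 h4

theorem reach {k l j : ℕ} {S : Set (Finset (ZMod k))} (hS : dc k l j ⊆ S)
    (hS' : ∀ s ∈ S, ∀ v ∈ s, ∀ w ∈ s,
      w - v ∈ AddSubgroup.zmultiples ((Nat.gcd l (Nat.gcd j k) : ℕ) : ZMod k)) (v w : ZMod k) :
    (cGraph k S).Reachable v w ↔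
      w - v ∈ AddSubgroup.zmultiples ((Nat.gcd l (Nat.gcd j k) : ℕ) : ZMod k) := by
  constructor
  · rintro ⟨p⟩
    induction p with
    | nil => simp
    | @cons u v w hadj p ih =>
      have h1 : v - u ∈ AddSubgroup.zmultiples ((Nat.gcd l (Nat.gcd j k) : ℕ) : ZMod k) := by
        rw [cGraph, SimpleGraph.fromRel_adj] at hadj
        rcases hadj.2 with ⟨s, hs, h1, h2⟩ | ⟨s, hs, h1, h2⟩
        · exact hS' s hs _ h1 _ h2
        · exact hS' s hs _ h2 _ h1
      have := add_mem ih h1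
      rwa [show w - v + (v - u) = w - u by ring] at this
  · let K : AddSubgroup (ZMod k) :=
      { carrier := {x | ∀ v, (cGraph k S).Reachable v (v + x)}
        zero_mem' := by intro v; simp
        add_mem' := by
          intro a b ha hb v
          have := (ha v).trans (hb (v + a))
          rwa [add_assoc] at this
        neg_mem' := by
          intro a ha v
          have := (ha (v + -a)).symm
          rwa [neg_add_cancel_right] at this }
    have step : ∀ s ∈ S, ∀ v ∈ s, ∀ w ∈ s, (cGraph k S).Reachable v w := by
      intro s hs v hv w hw
      by_cases hvw : v = w
      · rw [hvw]
      · exact SimpleGraph.Adj.reachable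
          ((SimpleGraph.fromRel_adj _ _ _).2 ⟨hvw, Or.inl ⟨s, hs, hv, hw⟩⟩)
    have hl : (l : ZMod k) ∈ K := by
      intro v
      exact step _ (hS ⟨v, rfl⟩) _ (by simp) _ (by simp)
    have hj : (j : ZMod k) ∈ K := by
      intro v
      refine step _ (hS ⟨v - l, rfl⟩) _ ?_ _ ?_ <;> simp
    have bez : ∀ a b : ℕ, (a : ZMod k) ∈ K → (b : ZMod k) ∈ K → ((Nat.gcd a b : ℕ) : ZMod k) ∈ K := by
      intro a b ha hb
      have h1 : ((Nat.gcd a b : ℕ) : ZMod k) = ((Nat.gcdA a b) • (a : ZMod k) + (Nat.gcdB a b) • (b : ZMod k)) := by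
        have := congrArg (Int.cast : ℤ → ZMod k) (Nat.gcd_eq_gcd_ab a b)
        push_cast at this
        rw [zsmul_eq_mul, zsmul_eq_mul, this]; ring
      rw [h1]
      exact add_mem (zsmul_mem ha _) (zsmul_mem hb _)
    have hgK := bez l (Nat.gcd j k) hl (bez j k hj (by simp))
    intro h
    have : w - v ∈ K := (AddSubgroup.zmultiples_le_of_mem hgK) h
    have := this v
    rwa [add_sub_cancel] at this

theorem dc_diff {k a b : ℕ} (H : AddSubgroup (ZMod k)) (ha : (a : ZMod k) ∈ H) (hb : (b : ZMod k) ∈ H)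
    {s : Finset (ZMod k)} (hs : s ∈ dc k a b) {v w : ZMod k} (hv : v ∈ s) (hw : w ∈ s) : w - v ∈ H := by
  obtain ⟨i, rfl⟩ := hs
  have key : ∀ x ∈ ({i, i + (a : ZMod k), i + a + b} : Finset (ZMod k)), x - i ∈ H := by
    intro x hx
    simp only [Finset.mem_insert, Finset.mem_singleton] at hx
    rcases hx with rfl | rfl | rfl
    · simp
    · simpa using ha
    · have := add_mem ha hb
      rwa [show i + (a : ZMod k) + b - i = a + b by ring]
  have := sub_mem (key w hw) (key v hv)
  rwa [show w - i - (v - i) = w - v by ring] at this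

theorem mem_zm {k g a : ℕ} (h : g ∣ a) : (a : ZMod k) ∈ AddSubgroup.zmultiples (g : ZMod k) := by
  obtain ⟨c, rfl⟩ := h
  refine AddSubgroup.mem_zmultiples_iff.2 ⟨c, ?_⟩
  simp [mul_comm]

end Aux

/-- For `k > 1` with `k ≡ 1, 5 (mod 6)`: the 2-skeleton of `Δ^{k−1}` (all 3-element
subsets of `ℤ/kℤ`) is the disjoint union of the `(k−1)/2` Möbius-strip complexes
`M_{l,k}` and the `(k²−6k+5)/12` torus complexes `S_{l,j,k}`; `M_{l,k}` has
`gcd(l,k)` connected components on `k/gcd(l,k)` vertices each, and `S_{l,j,k}` has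
`gcd(l,j,k)` connected components on `k/gcd(l,j,k)` vertices each. -/
theorem stmt_18 (k : ℕ) (hk : 1 < k) (hmod : k % 6 = 1 ∨ k % 6 = 5) :
    ({s : Finset (ZMod k) | s.card = 3} =
      (⋃ l ∈ {l : ℕ | mRange k l}, Mlk k l) ∪
      (⋃ p ∈ {p : ℕ × ℕ | tRange k p}, Sljk k p.1 p.2)) ∧
    (∀ l l' : ℕ, mRange k l → mRange k l' → l ≠ l' → Disjoint (Mlk k l) (Mlk k l')) ∧
    (∀ p q : ℕ × ℕ, tRange k p → tRange k q → p ≠ q →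
      Disjoint (Sljk k p.1 p.2) (Sljk k q.1 q.2)) ∧
    (∀ (l : ℕ) (p : ℕ × ℕ), mRange k l → tRange k p →
      Disjoint (Mlk k l) (Sljk k p.1 p.2)) ∧
    {l : ℕ | mRange k l}.ncard = (k - 1) / 2 ∧
    {p : ℕ × ℕ | tRange k p}.ncard = (k ^ 2 - 6 * k + 5) / 12 ∧
    (∀ l : ℕ, mRange k l →
      Nat.card (cGraph k (Mlk k l)).ConnectedComponent = Nat.gcd l k ∧
      ∀ c : (cGraph k (Mlk k l)).ConnectedComponent,
        Nat.card {v : ZMod k // (cGraph k (Mlk k l)).connectedComponentMk v = c} =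
          k / Nat.gcd l k) ∧
    (∀ p : ℕ × ℕ, tRange k p →
      Nat.card (cGraph k (Sljk k p.1 p.2)).ConnectedComponent =
        Nat.gcd p.1 (Nat.gcd p.2 k) ∧
      ∀ c : (cGraph k (Sljk k p.1 p.2)).ConnectedComponent,
        Nat.card {v : ZMod k // (cGraph k (Sljk k p.1 p.2)).connectedComponentMk v = c} =
          k / Nat.gcd p.1 (Nat.gcd p.2 k)) := by
  have mdc : ∀ {l}, mRange k l → 1 ≤ l ∧ l + l < k := by
    rintro l ⟨h1, h2⟩; omega
  refine ⟨?_, ?_, ?_, ?_, Aux.count k, Aux.tcount' k hmod, ?_, ?_⟩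
  · ext s
    simp only [Set.mem_setOf_eq, Set.mem_union, Set.mem_iUnion, exists_prop]
    constructor
    · intro h
      obtain ⟨a, b, ha, hb, hab, hs⟩ := Aux.exists_dc hk h
      rcases Aux.cover (k := k) (c := k - a - b) ha hb (by omega) (by omega) with ⟨l, hl, e⟩ | ⟨p, hp, e⟩
      · left; exact ⟨l, hl, e ▸ hs⟩
      · right; exact ⟨p, hp, e hs⟩
    · rintro (⟨l, hl, hs⟩ | ⟨p, hp, hs⟩)
      · have := mdc hl
        exact Aux.dc_card this.1 this.1 this.2 hs
      · obtain ⟨b, c, hs, h1, h2, h3, h4⟩ := Aux.mem_S hp hs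
        have := hp.1
        exact Aux.dc_card this (by omega) (by omega) hs
  · intro l l' hl hl' hne
    rw [Set.disjoint_left]
    intro s h h'
    have a1 := mdc hl
    have a2 := mdc hl'
    have := Aux.dc_inter a1.1 a1.1 a1.2 a2.1 a2.1 a2.2 h h'
    omega
  · intro p q hp hq hne
    rw [Set.disjoint_left]
    intro s h h'
    obtain ⟨b, c, hs, h1, h2, h3, h4⟩ := Aux.mem_S hp h
    obtain ⟨b', c', hs', h1', h2', h3', h4'⟩ := Aux.mem_S hq h'
    have a1 := hp.1
    have a2 := hq.1
    have := Aux.dc_inter a1 (by omega) (by omega) a2 (by omega) (by omega) hs hs'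
    exact hne (Prod.ext (by omega) (by omega))
  · intro l p hl hp
    rw [Set.disjoint_left]
    intro s h h'
    have a1 := mdc hl
    obtain ⟨b', c', hs', h1', h2', h3', h4'⟩ := Aux.mem_S hp h'
    have a2 := hp.1
    have := Aux.dc_inter a1.1 a1.1 a1.2 a2 (by omega) (by omega) h hs'
    omega
  · intro l hl
    have e : Nat.gcd l (Nat.gcd l k) = Nat.gcd l k := by
      rw [← Nat.gcd_assoc, Nat.gcd_self]
    have hr := Aux.reach (k := k) (l := l) (j := l) (S := Mlk k l) (fun s hs => hs) (by
      intro s hs v hv w hw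
      refine Aux.dc_diff _ (Aux.mem_zm ?_) (Aux.mem_zm ?_) hs hv hw <;> exact Nat.gcd_dvd_left _ _)
    rw [e] at hr
    exact Aux.comps (by omega) (Nat.gcd_dvd_right _ _) _ hr
  · intro p hp
    have d1 : Nat.gcd p.1 (Nat.gcd p.2 k) ∣ p.1 := Nat.gcd_dvd_left _ _
    have d2 : Nat.gcd p.1 (Nat.gcd p.2 k) ∣ p.2 := (Nat.gcd_dvd_right _ _).trans (Nat.gcd_dvd_left _ _)
    have d3 : Nat.gcd p.1 (Nat.gcd p.2 k) ∣ k := (Nat.gcd_dvd_right _ _).trans (Nat.gcd_dvd_right _ _)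
    have hr := Aux.reach (k := k) (l := p.1) (j := p.2) (S := Sljk k p.1 p.2)
      Set.subset_union_left (by
      intro s hs v hv w hw
      rcases hs with hs | hs
      · exact Aux.dc_diff _ (Aux.mem_zm d1) (Aux.mem_zm d2) hs hv hw
      · exact Aux.dc_diff _ (Aux.mem_zm d1)
          (Aux.mem_zm (Nat.dvd_sub (Nat.dvd_sub d3 d1) d2)) hs hv hw)
    exact Aux.comps (by omega) d3 _ hr
end

section
/- Let k > 1 with k ≡ 1 or 5 (mod 6) and let {a, b, c} be a 3-element subset of ℤ/kℤ represented by integers 0 ≤ a < b < c < k. If the three differences b−a, c−b and k−(c−a) are pairwise distinct, then {a, b, c} belongs to exactly one of the complexes S_{l,j,k} with 1 ≤ l < j < k − l − j, namely the one with l = min{b−a, c−b, k−(c−a)} and {l, j, k−l−j} = {b−a, c−b, k−(c−a)}; if at least two of the three differences are equal, then {a, b, c} belongs to M_{l,k} where l is the repeated difference and 1 ≤ l ≤ (k−1)/2. -/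
lemma cast_eq_cases {k u v : ℕ} (hu : u < 2 * k) (hv : v < k)
    (h : (u : ZMod k) = (v : ZMod k)) : u = v ∨ u = v + k := by
  rw [ZMod.natCast_eq_natCast_iff'] at h
  rw [Nat.mod_eq_of_lt hv] at h
  rcases lt_or_ge u k with h1 | h1
  · rw [Nat.mod_eq_of_lt h1] at h
    exact Or.inl h
  · rw [Nat.mod_eq_sub_mod h1, Nat.mod_eq_of_lt (by omega)] at h
    omega

lemma dc_forward {k a b c x y : ℕ} (hab : a < b) (hbc : b < c) (hck : c < k)
    (hx : 1 ≤ x) (hy : 1 ≤ y) (hxy : x + y < k)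
    (h : ({(a : ZMod k), (b : ZMod k), (c : ZMod k)} : Finset (ZMod k)) ∈ dc k x y) :
    (x = b - a ∧ y = c - b) ∨ (x = c - b ∧ y = k - (c - a)) ∨
      (x = k - (c - a) ∧ y = b - a) := by
  obtain ⟨i, hi⟩ := h
  have : NeZero k := ⟨by omega⟩
  obtain ⟨n, hn, rfl⟩ : ∃ n : ℕ, n < k ∧ (n : ZMod k) = i :=
    ⟨i.val, ZMod.val_lt i, ZMod.natCast_zmod_val i⟩
  have key : ∀ u : ℕ, u < 2 * k →
      (u : ZMod k) ∈ ({(a : ZMod k), (b : ZMod k), (c : ZMod k)} : Finset (ZMod k)) →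
      (u = a ∨ u = a + k) ∨ (u = b ∨ u = b + k) ∨ (u = c ∨ u = c + k) := by
    intro u hu hm
    simp only [Finset.mem_insert, Finset.mem_singleton] at hm
    rcases hm with hm | hm | hm
    · exact Or.inl (cast_eq_cases hu (by omega) hm)
    · exact Or.inr (Or.inl (cast_eq_cases hu (by omega) hm))
    · exact Or.inr (Or.inr (cast_eq_cases hu (by omega) hm))
  have h1 := key n (by omega) (by rw [hi]; simp)
  have h2 := key (n + x) (by omega) (by rw [hi]; simp)
  have h3 := key (n + x + y) (by omega) (by rw [hi]; simp)
  clear key hi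
  have h1' : n = a ∨ n = b ∨ n = c := by omega
  clear h1
  rcases h1' with rfl | rfl | rfl <;> rcases h2 with (h2 | h2) | (h2 | h2) | (h2 | h2) <;>
    first
    | (exfalso; omega)
    | (rcases h3 with (h3 | h3) | (h3 | h3) | (h3 | h3) <;> omega)

lemma dc_one {k a b c : ℕ} (hab : a < b) (hbc : b < c) :
    ({(a : ZMod k), (b : ZMod k), (c : ZMod k)} : Finset (ZMod k)) ∈ dc k (b - a) (c - b) := by
  refine ⟨(a : ZMod k), ?_⟩
  rw [Nat.cast_sub hab.le, Nat.cast_sub hbc.le]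
  congr 2 <;> ring_nf

lemma dc_two {k a b c : ℕ} (hab : a < b) (hbc : b < c) (hck : c < k) :
    ({(a : ZMod k), (b : ZMod k), (c : ZMod k)} : Finset (ZMod k)) ∈
      dc k (c - b) (k - (c - a)) := by
  refine ⟨(b : ZMod k), ?_⟩
  rw [Nat.cast_sub hbc.le, Nat.cast_sub (by omega), Nat.cast_sub (by omega), ZMod.natCast_self]
  have e1 : (b : ZMod k) + (c - b) = c := by ring
  have e2 : (c : ZMod k) + (0 - (c - a)) = a := by ring
  rw [e1, e2]
  ext t
  simp only [Finset.mem_insert, Finset.mem_singleton]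
  tauto

lemma dc_three {k a b c : ℕ} (hab : a < b) (hbc : b < c) (hck : c < k) :
    ({(a : ZMod k), (b : ZMod k), (c : ZMod k)} : Finset (ZMod k)) ∈
      dc k (k - (c - a)) (b - a) := by
  refine ⟨(c : ZMod k), ?_⟩
  rw [Nat.cast_sub hab.le, Nat.cast_sub (by omega), Nat.cast_sub (by omega), ZMod.natCast_self]
  have e1 : (c : ZMod k) + (0 - (c - a)) = a := by ring
  have e2 : (a : ZMod k) + (b - a) = b := by ring
  rw [e1, e2]
  ext t
  simp only [Finset.mem_insert, Finset.mem_singleton]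
  tauto

/-- For `k > 1` with `k ≡ 1, 5 (mod 6)` and a 3-element subset `{a, b, c}` of `ℤ/kℤ`
with `0 ≤ a < b < c < k`: if the differences `b−a`, `c−b`, `k−(c−a)` are pairwise
distinct then `{a, b, c}` lies in exactly one complex `S_{l,j,k}` with
`1 ≤ l < j < k−l−j`, namely the one with `l = min{b−a, c−b, k−(c−a)}` and
`{l, j, k−l−j} = {b−a, c−b, k−(c−a)}`; if at least two of the differences coincide,
then `{a, b, c} ∈ M_{l,k}` where `l` is the repeated difference, `1 ≤ l ≤ (k−1)/2`. -/
theorem stmt_19 (k a b c : ℕ) (hk : 1 < k) (hmod : k % 6 = 1 ∨ k % 6 = 5)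
    (hab : a < b) (hbc : b < c) (hck : c < k) :
    let T : Finset (ZMod k) := {(a : ZMod k), (b : ZMod k), (c : ZMod k)}
    let d1 := b - a
    let d2 := c - b
    let d3 := k - (c - a)
    ((d1 ≠ d2 ∧ d1 ≠ d3 ∧ d2 ≠ d3) →
      (∃! p : ℕ × ℕ, (1 ≤ p.1 ∧ p.1 < p.2 ∧ p.1 + 2 * p.2 < k) ∧ T ∈ Sljk k p.1 p.2) ∧
      (∀ p : ℕ × ℕ, (1 ≤ p.1 ∧ p.1 < p.2 ∧ p.1 + 2 * p.2 < k) → T ∈ Sljk k p.1 p.2 →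
        p.1 = min d1 (min d2 d3) ∧
        ({p.1, p.2, k - p.1 - p.2} : Finset ℕ) = ({d1, d2, d3} : Finset ℕ))) ∧
    ((d1 = d2 ∨ d1 = d3 ∨ d2 = d3) →
      ∃ l : ℕ, 1 ≤ l ∧ 2 * l ≤ k - 1 ∧ T ∈ Mlk k l ∧
        ((d1 = d2 ∧ l = d1) ∨ (d1 = d3 ∧ l = d1) ∨ (d2 = d3 ∧ l = d2))) := by
  intro T d1 d2 d3
  have m1 : T ∈ dc k d1 d2 := dc_one hab hbc
  have m2 : T ∈ dc k d2 d3 := dc_two hab hbc hck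
  have m3 : T ∈ dc k d3 d1 := dc_three hab hbc hck
  have fwd : ∀ x y : ℕ, 1 ≤ x → 1 ≤ y → x + y < k → T ∈ dc k x y →
      (x = d1 ∧ y = d2) ∨ (x = d2 ∧ y = d3) ∨ (x = d3 ∧ y = d1) :=
    fun x y hx hy hxy h => dc_forward hab hbc hck hx hy hxy h
  have p1 : 1 ≤ d1 := by omega
  have p2 : 1 ≤ d2 := by omega
  have p3 : 1 ≤ d3 := by omega
  have hs : d1 + d2 + d3 = k := by omega
  clear_value T d1 d2 d3
  constructor
  · rintro ⟨n12, n13, n23⟩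
    -- the six possible identifications of an ordered triple with the differences
    have fwdS : ∀ l j : ℕ, 1 ≤ l → l < j → l + 2 * j < k → T ∈ Sljk k l j →
        (l = d1 ∧ j = d2) ∨ (l = d2 ∧ j = d3) ∨ (l = d3 ∧ j = d1) ∨
        (l = d1 ∧ j = d3) ∨ (l = d2 ∧ j = d1) ∨ (l = d3 ∧ j = d2) := by
      intro l j hl hlj hjk h
      rcases h with h | h
      · have := fwd _ _ hl (by omega) (by omega) h
        omega
      · have := fwd _ _ hl (by omega) (by omega) h
        omega
    have ex : ∃ l j : ℕ, 1 ≤ l ∧ l < j ∧ l + 2 * j < k ∧ T ∈ Sljk k l j := by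
      have e1 : k - d1 - d3 = d2 := by omega
      have e2 : k - d2 - d1 = d3 := by omega
      have e3 : k - d3 - d2 = d1 := by omega
      have s1 : T ∈ Sljk k d1 d2 := Or.inl m1
      have s2 : T ∈ Sljk k d2 d3 := Or.inl m2
      have s3 : T ∈ Sljk k d3 d1 := Or.inl m3
      have s4 : T ∈ Sljk k d1 d3 := Or.inr (by rw [e1]; exact m1)
      have s5 : T ∈ Sljk k d2 d1 := Or.inr (by rw [e2]; exact m2)
      have s6 : T ∈ Sljk k d3 d2 := Or.inr (by rw [e3]; exact m3)
      have ord : (d1 < d2 ∧ d2 < d3) ∨ (d2 < d3 ∧ d3 < d1) ∨ (d3 < d1 ∧ d1 < d2) ∨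
          (d1 < d3 ∧ d3 < d2) ∨ (d2 < d1 ∧ d1 < d3) ∨ (d3 < d2 ∧ d2 < d1) := by omega
      rcases ord with o | o | o | o | o | o
      · exact ⟨d1, d2, by omega, by omega, by omega, s1⟩
      · exact ⟨d2, d3, by omega, by omega, by omega, s2⟩
      · exact ⟨d3, d1, by omega, by omega, by omega, s3⟩
      · exact ⟨d1, d3, by omega, by omega, by omega, s4⟩
      · exact ⟨d2, d1, by omega, by omega, by omega, s5⟩
      · exact ⟨d3, d2, by omega, by omega, by omega, s6⟩
    refine ⟨?_, ?_⟩
    · obtain ⟨l, j, hl, hlj, hjk, h⟩ := ex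
      refine ⟨(l, j), ⟨⟨hl, hlj, hjk⟩, h⟩, ?_⟩
      rintro ⟨l', j'⟩ ⟨⟨hl', hlj', hjk'⟩, h'⟩
      have A := fwdS l j hl hlj hjk h
      have B := fwdS l' j' hl' hlj' hjk' h'
      simp only at hl' hlj' hjk'
      rw [Prod.mk.injEq]
      omega
    · rintro ⟨l, j⟩ ⟨hl, hlj, hjk⟩ h
      have A := fwdS l j hl hlj hjk h
      simp only at hl hlj hjk ⊢
      refine ⟨by omega, ?_⟩
      ext t
      simp only [Finset.mem_insert, Finset.mem_singleton]
      omega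
  · intro h
    by_cases h12 : d1 = d2
    · exact ⟨d1, p1, by omega, by subst h12; exact m1, Or.inl ⟨h12, rfl⟩⟩
    · by_cases h13 : d1 = d3
      · exact ⟨d1, p1, by omega, by subst h13; exact m3, Or.inr (Or.inl ⟨h13, rfl⟩)⟩
      · have h23 : d2 = d3 := by omega
        exact ⟨d2, p2, by omega, by subst h23; exact m2, Or.inr (Or.inr ⟨h23, rfl⟩)⟩
end
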